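/- For 1 ≤ j,k ≤ n set G_{j,k} := (1/|λ_j|) · ∂/∂z̄_j [ (h(z)^{−1} · ∂h/∂z_k(z))_{k,j} ] evaluated at z = 0, where ∂h/∂z_k is the entrywise Wirtinger derivative of the matrix h; G_{j,k} is the paper's curvature pairing ⟨(Θ_φ e_j | e_k)_{|φ|}, ē_j ∧ e_k⟩(0), with Θ_φ = ∂̄(h^{−1}∂h) the curvature of the connection induced by ∂∂̄φ. Then: (1) for q+1 ≤ j,k ≤ n: G_{j,k} = (1/(|λ_j||λ_k|)) ∂^4φ/∂z̄_j∂z_j∂z̄_k∂z_k(0) + Σ_{t=1}^q (1/(|λ_t||λ_j||λ_k|)) |∂^3φ/∂z̄_j∂z_t∂z̄_k(0)|^2 − Σ_{t=q+1}^n (1/(|λ_t||λ_j||λ_k|)) |∂^3φ/∂z̄_j∂z_t∂z̄_k(0)|^2; (2) for 1 ≤ j,k ≤ q: G_{j,k} = −(1/(|λ_j||λ_k|)) ∂^4φ/∂z̄_j∂z_j∂z̄_k∂z_k(0) − Σ_{t=1}^q (1/(|λ_t||λ_j||λ_k|)) |∂^3φ/∂z̄_j∂z_t∂z̄_k(0)|^2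 + Σ_{t=q+1}^n (1/(|λ_t||λ_j||λ_k|)) |∂^3φ/∂z̄_j∂z_t∂z̄_k(0)|^2; (3) for q+1 ≤ j ≤ n and 1 ≤ k ≤ q: G_{j,k} equals the expression in case (2); (4) for 1 ≤ j ≤ q and q+1 ≤ k ≤ n: G_{j,k} equals the expression in case (1). -/

import Mathlib

open Complex Asymptotics

attribute [local instance] Classical.propDecidable

noncomputable section

/-- `ℂⁿ` as `Fin n → ℂ`. -/
abbrev Cn (n : ℕ) := Fin n → ℂ

/-- Wirtinger derivative `∂/∂z_j = (1/2)(∂/∂x_{2j-1} − i ∂/∂x_{2j})`. -/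
def wd {n : ℕ} (j : Fin n) (f : Cn n → ℂ) : Cn n → ℂ := fun z =>
  (1 / 2 : ℂ) *
    (fderiv ℝ f z (Pi.single j 1) - Complex.I * fderiv ℝ f z (Pi.single j Complex.I))

/-- Wirtinger derivative `∂/∂z̄_j = (1/2)(∂/∂x_{2j-1} + i ∂/∂x_{2j})`. -/
def wdb {n : ℕ} (j : Fin n) (f : Cn n → ℂ) : Cn n → ℂ := fun z =>
  (1 / 2 : ℂ) *
    (fderiv ℝ f z (Pi.single j 1) + Complex.I * fderiv ℝ f z (Pi.single j Complex.I))

/-- A real-valued function regarded as complex-valued. -/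
def cplx {n : ℕ} (φ : Cn n → ℝ) : Cn n → ℂ := fun z => (φ z : ℂ)

/-- `φ` is smooth and `φ(z) = Σ_j λ_j |z_j|² + O(|z|³)` as `z → 0`. -/
def PhiOK {n : ℕ} (lam : Fin n → ℝ) (φ : Cn n → ℝ) : Prop :=
  ContDiff ℝ (⊤ : ℕ∞) φ ∧
    (fun z : Cn n => φ z - ∑ j, lam j * Complex.normSq (z j)) =O[nhds 0] fun z => ‖z‖ ^ 3

/-- The conditions (a)–(e) on the phase function `ψ`. -/
def Admissible {n : ℕ} (lam : Fin n → ℝ) (φ : Cn n → ℝ) (ψ : Cn n → Cn n → ℂ) : Prop :=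
  ContDiff ℝ (⊤ : ℕ∞) (fun p : Cn n × Cn n => ψ p.1 p.2) ∧
  -- (a)
  (∀ z, ψ z z = 0) ∧
  (∀ z w, ψ z w = - (starRingEnd ℂ) (ψ w z)) ∧
  -- (b)
  (∃ c : ℝ, 0 < c ∧ ∀ z w, c * ‖z - w‖ ^ 2 ≤ (ψ z w).im) ∧
  -- (c): on the diagonal, ∂ψ/∂z̄_j = i ∂φ/∂z̄_j, ∂ψ/∂z_j = −i ∂φ/∂z_j,
  --      ∂ψ/∂w̄_j = −i ∂φ/∂z̄_j, ∂ψ/∂w_j = i ∂φ/∂z_j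
  (∀ (z : Cn n) (j : Fin n), wdb j (fun x => ψ x z) z = Complex.I * wdb j (cplx φ) z) ∧
  (∀ (z : Cn n) (j : Fin n), wd j (fun x => ψ x z) z = - Complex.I * wd j (cplx φ) z) ∧
  (∀ (z : Cn n) (j : Fin n), wdb j (fun w => ψ z w) z = - Complex.I * wdb j (cplx φ) z) ∧
  (∀ (z : Cn n) (j : Fin n), wd j (fun w => ψ z w) z = Complex.I * wd j (cplx φ) z) ∧
  -- (d): Σ_j (i ∂ψ/∂z̄_j + ∂φ/∂z̄_j)(−i ∂ψ/∂z_j + ∂φ/∂z_j) vanishes to infinite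
  --      order on the diagonal
  (∀ (m : ℕ) (z : Cn n),
    iteratedFDeriv ℝ m
      (fun p : Cn n × Cn n =>
        ∑ j, (Complex.I * wdb j (fun x => ψ x p.2) p.1 + wdb j (cplx φ) p.1) *
             (- Complex.I * wd j (fun x => ψ x p.2) p.1 + wd j (cplx φ) p.1))
      (z, z) = 0) ∧
  -- (e)
  ((fun p : Cn n × Cn n =>
      ψ p.1 p.2 -
        (Complex.I * ∑ j, ((|lam j| * Complex.normSq (p.1 j - p.2 j) : ℝ) : ℂ)
          + Complex.I * ∑ j, ((lam j : ℝ) : ℂ) *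
              ((starRingEnd ℂ) (p.1 j) * p.2 j - (starRingEnd ℂ) (p.2 j) * p.1 j)))
    =O[nhds 0] fun p => ‖p‖ ^ 3)
/-- The complex Hessian matrix `h(z) = (∂²φ/∂z̄_j∂z_k(z))`. -/
def hMat {n : ℕ} (φ : Cn n → ℝ) (z : Cn n) : Matrix (Fin n) (Fin n) ℂ :=
  Matrix.of fun j k => wdb j (wd k (cplx φ)) z

/-- The entrywise Wirtinger derivative `∂h/∂z_k`. -/
def dh {n : ℕ} (φ : Cn n → ℝ) (k : Fin n) (z : Cn n) : Matrix (Fin n) (Fin n) ℂ :=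
  Matrix.of fun a b => wd k (fun x => hMat φ x a b) z

/-- The curvature pairing `G_{j,k} = (1/|λ_j|) ∂/∂z̄_j [(h⁻¹ ∂h/∂z_k)_{k,j}]` at `0`,
i.e. `⟨(Θ_φ e_j | e_k)_{|φ|}, ē_j ∧ e_k⟩(0)` with `Θ_φ = ∂̄(h⁻¹ ∂h)`. -/
def Gpair {n : ℕ} (lam : Fin n → ℝ) (φ : Cn n → ℝ) (j k : Fin n) : ℂ :=
  ((1 / |lam j| : ℝ) : ℂ) *
    wdb j (fun z => ((hMat φ z)⁻¹ * dh φ k z) k j) 0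

/-!
Differentiating `h * (h⁻¹ * ∂h) = ∂h` gives
`∂̄(h⁻¹ ∂h) = h⁻¹ (∂̄∂h) - h⁻¹ (∂̄h) h⁻¹ (∂h)`. By Taylor's formula `h(0)` is the diagonal
matrix of the `λ_j`, so the `(k, j)` entry at `0` is `1 / λ_k` times
`∂̄_j ∂_j ∂̄_k ∂_k φ - ∑ t, (∂̄_j h_{kt}) (∂_k h_{tj}) / λ_t`. Partial derivatives commute and
`φ` is real, so the two factors in the sum are complex conjugates of each other; the signs of the
`λ_t` then distribute the sum over the negative and the positive eigenvalues.
-/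

open Filter Topology Matrix ComplexConjugate

section Taylor

variable {E F : Type*} [NormedAddCommGroup E] [NormedSpace ℝ E]
  [NormedAddCommGroup F] [NormedSpace ℝ F]

lemma taylor_two_isLittleO {f : E → F} {x : E} (hf : ContDiffAt ℝ 2 f x) :
    (fun y => f y - f x - fderiv ℝ f x (y - x)
        - (1 / 2 : ℝ) • fderiv ℝ (fderiv ℝ f) x (y - x) (y - x))
      =o[𝓝 x] fun y => ‖y - x‖ ^ 2 := by
  set A := fderiv ℝ (fderiv ℝ f) x
  have hsymm : IsSymmSndFDerivAt ℝ f x := hf.isSymmSndFDerivAt (by simp)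
  obtain ⟨r, hr, hdiff⟩ : ∃ r > 0, ∀ y ∈ Metric.ball x r, DifferentiableAt ℝ f y :=
    Metric.eventually_nhds_iff_ball.1 <|
      (hf.eventually (by simp)).mono fun y hy => hy.differentiableAt two_ne_zero
  have hderiv : ∀ y ∈ Metric.ball x r, HasFDerivWithinAt
      (fun y => f y - fderiv ℝ f x (y - x) - (1 / 2 : ℝ) • A (y - x) (y - x))
      (fderiv ℝ f y - fderiv ℝ f x - A (y - x)) (Metric.ball x r) y := by
    intro y hy
    have hid : HasFDerivAt (fun y => y - x) (ContinuousLinearMap.id ℝ E) y :=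
      (hasFDerivAt_id y).sub_const x
    have hquad := (A.hasFDerivAt_of_bilinear hid hid).const_smul (1 / 2 : ℝ)
    have hlin := (fderiv ℝ f x).hasFDerivAt.comp y hid
    refine (((hdiff y hy).hasFDerivAt.sub hlin).sub hquad).hasFDerivWithinAt.congr_fderiv ?_
    ext v
    have hswap : A v (y - x) = A (y - x) v := hsymm.eq v (y - x)
    simp only [_root_.sub_apply, _root_.add_apply, _root_.smul_apply,
      ContinuousLinearMap.comp_id, ContinuousLinearMap.precompR_apply,
      ContinuousLinearMap.precompL_apply, ContinuousLinearMap.compL_apply,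
      ContinuousLinearMap.id_apply, hswap]
    module
  have hsmall : (fun y => fderiv ℝ f y - fderiv ℝ f x - A (y - x))
      =o[𝓝[Metric.ball x r] x] fun y => ‖y - x‖ ^ 1 := by
    have hA' := ((hf.fderiv_right (m := 1) le_rfl).differentiableAt one_ne_zero).hasFDerivAt
    simpa only [pow_one] using hA'.isLittleO.norm_right.mono nhdsWithin_le_nhds
  have h := (convex_ball x r).isLittleO_pow_succ (Metric.mem_ball_self hr) hderiv hsmall
  rw [Metric.isOpen_ball.nhdsWithin_eq (Metric.mem_ball_self hr)] at h
  refine h.congr_left fun y => ?_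
  simp only [sub_self, map_zero, smul_zero, sub_zero]
  abel

lemma bilin_apply_self_eq_zero_of_isLittleO {Q : E →L[ℝ] E →L[ℝ] F}
    (h : (fun z => Q z z) =o[𝓝 0] fun z => ‖z‖ ^ 2) (v : E) : Q v v = 0 := by
  have hlim : Tendsto (fun t : ℝ => t • v) (𝓝[≠] 0) (𝓝 0) :=
    ((continuous_id.smul continuous_const).tendsto' 0 0 (zero_smul ℝ v)).mono_left
      nhdsWithin_le_nhds
  have hscaled : (fun t : ℝ => (t ^ 2)⁻¹ • Q (t • v) (t • v))
      =o[𝓝[≠] 0] fun t : ℝ => (t ^ 2)⁻¹ • ‖t • v‖ ^ 2 :=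
    (isBigO_refl _ _).smul_isLittleO (h.comp_tendsto hlim)
  have hconst : (fun _ : ℝ => Q v v) =o[𝓝[≠] 0] fun _ : ℝ => ‖v‖ ^ 2 := by
    refine hscaled.congr' ?_ ?_ <;>
      filter_upwards [self_mem_nhdsWithin] with t (ht : t ≠ 0)
    · simp [smul_smul, ← pow_two, ht]
    · simp [norm_smul, mul_pow, ht]
  rcases eq_or_ne v 0 with rfl | hv
  · simp
  · have : ‖v‖ ^ 2 ≠ 0 := pow_ne_zero 2 (norm_ne_zero_iff.2 hv)
    simpa [hv] using hconst

lemma fderiv_fderiv_zero_of_isLittleO {f : E → F} {B : E →L[ℝ] E →L[ℝ] F}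
    (hf : ContDiffAt ℝ 2 f 0) (h : (fun z => f z - B z z) =o[𝓝 0] fun z => ‖z‖ ^ 2) (v w : E) :
    fderiv ℝ (fderiv ℝ f) 0 v w = B v w + B w v := by
  have hf_bigO : f =O[𝓝 0] fun z => ‖z‖ ^ 2 := by
    have hB : (fun z => B z z) =O[𝓝 0] fun z => ‖z‖ ^ 2 :=
      .of_bound ‖B‖ <| .of_forall fun z => by
        simpa [pow_two, mul_assoc] using B.le_opNorm₂ z z
    simpa using h.isBigO.add hB
  have hf0 : f 0 = 0 := by simpa using hf_bigO.eq_zero_imp.self_of_nhds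
  have hf1 : fderiv ℝ f 0 = 0 := by
    refine (HasFDerivAt.of_isLittleO ?_).fderiv
    simpa [hf0] using hf_bigO.trans_isLittleO
      (isLittleO_norm_pow_id one_lt_two)
  set A := fderiv ℝ (fderiv ℝ f) 0 with hA
  have hdiag : ∀ u, ((1 / 2 : ℝ) • A - B) u u = 0 :=
    bilin_apply_self_eq_zero_of_isLittleO <| by
      refine (h.sub (by simpa [hf0, hf1] using taylor_two_isLittleO hf)).congr_left fun z => ?_
      simp [hA]
  have hswap : A w v = A v w := (hf.isSymmSndFDerivAt (by simp)).eq w v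
  have hpolar := hdiag (v + w)
  have hv := hdiag v
  have hw := hdiag w
  simp only [map_add, _root_.add_apply, _root_.sub_apply, _root_.smul_apply, hswap]
    at hpolar hv hw
  linear_combination (norm := module) hpolar - hv - hw

end Taylor

section ComplexTangentVector

variable {E F : Type*} [NormedAddCommGroup E] [NormedSpace ℝ E]
  [NormedAddCommGroup F] [NormedSpace ℝ F] [NormedSpace ℂ F]

/-- The derivative of `f` along the complex tangent vector `X.1 + i X.2` of the real normed
space `E`. Both families of Wirtinger derivatives are instances, which lets one set of rules
(product, inverse, symmetry of second derivatives) serve for all of them. -/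
def dirDeriv (X : E × E) (f : E → F) (z : E) : F :=
  fderiv ℝ f z X.1 + I • fderiv ℝ f z X.2

lemma dirDeriv_congr {f g : E → F} {z : E} (h : f =ᶠ[𝓝 z] g) (X : E × E) :
    dirDeriv X f =ᶠ[𝓝 z] dirDeriv X g :=
  h.fderiv (𝕜 := ℝ) |>.mono fun _ hx => by simp only [dirDeriv, hx]

lemma contDiffAt_dirDeriv [IsScalarTower ℝ ℂ F] {m n : WithTop ℕ∞} {f : E → F} {z : E}
    (hf : ContDiffAt ℝ n f z) (hmn : m + 1 ≤ n) (X : E × E) : ContDiffAt ℝ m (dirDeriv X f) z := by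
  have hD (v : E) : ContDiffAt ℝ m (fun x => fderiv ℝ f x v) z :=
    (hf.fderiv_right hmn).clm_apply contDiffAt_const
  exact (hD X.1).add ((hD X.2).const_smul I)

lemma dirDeriv_dirDeriv_apply [IsScalarTower ℝ ℂ F] {f : E → F} {z : E} (hf : ContDiffAt ℝ 2 f z)
    (X Y : E × E) :
    dirDeriv X (dirDeriv Y f) z =
      fderiv ℝ (fderiv ℝ f) z X.1 Y.1 - fderiv ℝ (fderiv ℝ f) z X.2 Y.2
        + I • (fderiv ℝ (fderiv ℝ f) z X.1 Y.2 + fderiv ℝ (fderiv ℝ f) z X.2 Y.1) := by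
  have hdiff : DifferentiableAt ℝ (fderiv ℝ f) z :=
    (hf.fderiv_right (m := 1) le_rfl).differentiableAt one_ne_zero
  have hdir (v : E) : HasFDerivAt (fun x => fderiv ℝ f x v)
      ((fderiv ℝ (fderiv ℝ f) z).flip v) z := by
    simpa using hdiff.hasFDerivAt.clm_apply (hasFDerivAt_const v z)
  have hY : fderiv ℝ (dirDeriv Y f) z =
      (fderiv ℝ (fderiv ℝ f) z).flip Y.1 + I • (fderiv ℝ (fderiv ℝ f) z).flip Y.2 :=
    ((hdir Y.1).add ((hdir Y.2).const_smul I)).fderiv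
  simp only [dirDeriv.eq_def X, hY, _root_.add_apply, _root_.smul_apply,
    ContinuousLinearMap.flip_apply, smul_add, smul_smul, I_mul_I, neg_smul, one_smul]
  abel

lemma dirDeriv_comm [IsScalarTower ℝ ℂ F] {f : E → F} {z : E} (hf : ContDiffAt ℝ 2 f z)
    (X Y : E × E) : dirDeriv X (dirDeriv Y f) =ᶠ[𝓝 z] dirDeriv Y (dirDeriv X f) := by
  filter_upwards [hf.eventually (by simp)] with x hx
  have hsymm : IsSymmSndFDerivAt ℝ f x := hx.isSymmSndFDerivAt (by simp)
  rw [dirDeriv_dirDeriv_apply hx, dirDeriv_dirDeriv_apply hx, hsymm.eq X.1 Y.1, hsymm.eq X.2 Y.2,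
    hsymm.eq X.1 Y.2, hsymm.eq X.2 Y.1, add_comm (fderiv ℝ (fderiv ℝ f) x Y.2 X.1)]

lemma dirDeriv_reverse [IsScalarTower ℝ ℂ F] {f : E → F} {z : E}
    (hf : ContDiffAt ℝ 3 f z) (X Y Z : E × E) :
    dirDeriv X (dirDeriv Y (dirDeriv Z f)) =ᶠ[𝓝 z] dirDeriv Z (dirDeriv Y (dirDeriv X f)) := by
  have hf' : ContDiffAt ℝ 2 f z := hf.of_le (by norm_num)
  have hD (W : E × E) : ContDiffAt ℝ 2 (dirDeriv W f) z := contDiffAt_dirDeriv hf (by norm_num) W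
  calc dirDeriv X (dirDeriv Y (dirDeriv Z f))
      =ᶠ[𝓝 z] dirDeriv X (dirDeriv Z (dirDeriv Y f)) := dirDeriv_congr (dirDeriv_comm hf' Y Z) X
    _ =ᶠ[𝓝 z] dirDeriv Z (dirDeriv X (dirDeriv Y f)) := dirDeriv_comm (hD Y) X Z
    _ =ᶠ[𝓝 z] dirDeriv Z (dirDeriv Y (dirDeriv X f)) := dirDeriv_congr (dirDeriv_comm hf' X Y) Z

end ComplexTangentVector

section Algebra

variable {E : Type*} [NormedAddCommGroup E] [NormedSpace ℝ E] {z : E}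

lemma dirDeriv_sum {ι : Type*} {s : Finset ι} {f : ι → E → ℂ}
    (hf : ∀ i ∈ s, DifferentiableAt ℝ (f i) z) (X : E × E) :
    dirDeriv X (fun x => ∑ i ∈ s, f i x) z = ∑ i ∈ s, dirDeriv X (f i) z := by
  simp only [dirDeriv, fderiv_fun_sum hf, _root_.sum_apply, Finset.smul_sum,
    Finset.sum_add_distrib]

lemma dirDeriv_mul {f g : E → ℂ} (hf : DifferentiableAt ℝ f z)
    (hg : DifferentiableAt ℝ g z) (X : E × E) :
    dirDeriv X (fun x => f x * g x) z =
      dirDeriv X f z * g z + f z * dirDeriv X g z := by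
  simp only [dirDeriv, fderiv_fun_mul hf hg, _root_.add_apply, _root_.smul_apply,
    smul_eq_mul]
  ring

variable {ι : Type*} [Fintype ι] {M N : E → Matrix ι ι ℂ}

lemma dirDeriv_matrix_mul (hM : ∀ a b, DifferentiableAt ℝ (fun x => M x a b) z)
    (hN : ∀ a b, DifferentiableAt ℝ (fun x => N x a b) z) (X : E × E) :
    of (fun a b => dirDeriv X (fun x => (M x * N x) a b) z) =
      of (fun a b => dirDeriv X (fun x => M x a b) z) * N z
        + M z * of (fun a b => dirDeriv X (fun x => N x a b) z) := by
  ext a b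
  simp only [mul_apply, of_apply, Matrix.add_apply, ← Finset.sum_add_distrib,
    dirDeriv_sum fun t _ => (hM a t).fun_mul (hN t b),
    dirDeriv_mul (hM a _) (hN _ b)]

variable [DecidableEq ι]

lemma differentiableAt_matrix_det (hM : ∀ a b, DifferentiableAt ℝ (fun x => M x a b) z) :
    DifferentiableAt ℝ (fun x => (M x).det) z := by
  simp only [det_apply]
  exact .fun_sum fun σ _ => DifferentiableAt.const_smul
    (HasFDerivAt.finsetProd fun i _ => (hM (σ i) i).hasFDerivAt).differentiableAt _

lemma differentiableAt_matrix_inv_apply (hM : ∀ a b, DifferentiableAt ℝ (fun x => M x a b) z)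
    (hdet : (M z).det ≠ 0) (i j : ι) : DifferentiableAt ℝ (fun x => (M x)⁻¹ i j) z := by
  have hadj : DifferentiableAt ℝ (fun x => (M x).adjugate i j) z := by
    simp only [adjugate_apply]
    refine differentiableAt_matrix_det fun a b => ?_
    rcases eq_or_ne a j with rfl | ha
    · simp
    · simpa [ha] using hM a b
  simp only [Matrix.inv_def, Ring.inverse_eq_inv', Matrix.smul_apply, smul_eq_mul]
  exact ((differentiableAt_matrix_det hM).fun_inv hdet).fun_mul hadj

lemma dirDeriv_matrix_inv_mul (hM : ∀ a b, DifferentiableAt ℝ (fun x => M x a b) z)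
    (hN : ∀ a b, DifferentiableAt ℝ (fun x => N x a b) z) (hdet : (M z).det ≠ 0) (X : E × E) :
    of (fun a b => dirDeriv X (fun x => ((M x)⁻¹ * N x) a b) z) =
      (M z)⁻¹ * of (fun a b => dirDeriv X (fun x => N x a b) z)
        - (M z)⁻¹ * of (fun a b => dirDeriv X (fun x => M x a b) z) * (M z)⁻¹ * N z := by
  have hP (a b : ι) : DifferentiableAt ℝ (fun x => ((M x)⁻¹ * N x) a b) z := by
    simp only [mul_apply]
    exact .fun_sum fun t _ => (differentiableAt_matrix_inv_apply hM hdet a t).fun_mul (hN t b)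
  have hMP : ∀ᶠ x in 𝓝 z, M x * ((M x)⁻¹ * N x) = N x := by
    filter_upwards [(differentiableAt_matrix_det hM).continuousAt.eventually_ne hdet] with x hx
    exact mul_nonsing_inv_cancel_left _ _ hx.isUnit
  have hderiv : of (fun a b => dirDeriv X (fun x => N x a b) z) =
      of (fun a b => dirDeriv X (fun x => M x a b) z) * ((M z)⁻¹ * N z)
        + M z * of (fun a b => dirDeriv X (fun x => ((M x)⁻¹ * N x) a b) z) := by
    rw [← dirDeriv_matrix_mul hM hP]
    ext a b
    exact (dirDeriv_congr (hMP.mono fun x hx => by simp only [hx]) X).self_of_nhds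
  rw [hderiv, Matrix.mul_add, nonsing_inv_mul_cancel_left _ _ hdet.isUnit]
  simp only [Matrix.mul_assoc, add_sub_cancel_left]

end Algebra

section Wirtinger

variable {n : ℕ}

/-- The complex tangent vector `∂/∂z_j`, in the encoding of `dirDeriv`. -/
def dz (j : Fin n) : Cn n × Cn n := (Pi.single j (1 / 2), -Pi.single j (I / 2))

/-- The complex tangent vector `∂/∂z̄_j`, in the encoding of `dirDeriv`. -/
def dzbar (j : Fin n) : Cn n × Cn n := (Pi.single j (1 / 2), Pi.single j (I / 2))

lemma single_div_two (j : Fin n) (c : ℂ) :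
    (Pi.single j (c / 2) : Cn n) = (1 / 2 : ℝ) • Pi.single j c := by
  rw [← Pi.single_smul, real_smul]
  congr 1
  push_cast
  ring

lemma wd_eq_dirDeriv (j : Fin n) (f : Cn n → ℂ) : wd j f = dirDeriv (dz j) f := by
  ext z
  simp only [wd, dirDeriv, dz, single_div_two, map_neg, map_smul, real_smul, smul_eq_mul]
  push_cast
  ring

lemma wdb_eq_dirDeriv (j : Fin n) (f : Cn n → ℂ) : wdb j f = dirDeriv (dzbar j) f := by
  ext z
  simp only [wdb, dirDeriv, dzbar, single_div_two, map_smul, real_smul, smul_eq_mul]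
  push_cast
  ring

lemma fderiv_conj_apply {E : Type*} [NormedAddCommGroup E] [NormedSpace ℝ E] (f : E → ℂ)
    (z v : E) : fderiv ℝ (fun x => conj (f x)) z v = conj (fderiv ℝ f z v) :=
  congrArg (· v) (conjCLE.comp_fderiv (f := f) (x := z))

lemma conj_wd (j : Fin n) (f : Cn n → ℂ) (z : Cn n) :
    conj (wd j f z) = wdb j (fun x => conj (f x)) z := by
  simp only [wd, wdb, fderiv_conj_apply, map_mul, map_sub, map_div₀, map_one, map_ofNat, conj_I]
  ring

lemma conj_wdb (j : Fin n) (f : Cn n → ℂ) (z : Cn n) :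
    conj (wdb j f z) = wd j (fun x => conj (f x)) z := by
  simp only [wd, wdb, fderiv_conj_apply, map_mul, map_add, map_div₀, map_one, map_ofNat, conj_I]
  ring

end Wirtinger

section Potential

variable {n : ℕ} {φ : Cn n → ℝ} {z : Cn n}

lemma contDiffAt_cplx {m : WithTop ℕ∞} (hφ : ContDiffAt ℝ m φ z) : ContDiffAt ℝ m (cplx φ) z :=
  ofRealCLM.contDiff.contDiffAt.comp z hφ

lemma contDiffAt_hMat_apply {m : WithTop ℕ∞} (hφ : ContDiffAt ℝ (m + 2) φ z) (a b : Fin n) :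
    ContDiffAt ℝ m (fun x => hMat φ x a b) z := by
  simp only [hMat, of_apply, wd_eq_dirDeriv, wdb_eq_dirDeriv]
  have hφ' : ContDiffAt ℝ (m + 1 + 1) (cplx φ) z := by
    rw [add_assoc, one_add_one_eq_two]
    exact contDiffAt_cplx hφ
  exact contDiffAt_dirDeriv (contDiffAt_dirDeriv hφ' le_rfl _) le_rfl _

lemma contDiffAt_dh_apply {m : WithTop ℕ∞} (hφ : ContDiffAt ℝ (m + 3) φ z) (k a b : Fin n) :
    ContDiffAt ℝ m (fun x => dh φ k x a b) z := by
  simp only [dh, of_apply, wd_eq_dirDeriv]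
  refine contDiffAt_dirDeriv (contDiffAt_hMat_apply (m := m + 1) ?_ a b) le_rfl _
  rwa [add_assoc, show (1 + 2 : WithTop ℕ∞) = 3 by norm_num]

lemma wdb_hMat_apply (hφ : ContDiffAt ℝ 3 φ z) (j k t : Fin n) :
    wdb j (fun x => hMat φ x k t) z = wdb j (wd t (wdb k (cplx φ))) z := by
  simp only [hMat, of_apply, wd_eq_dirDeriv, wdb_eq_dirDeriv]
  exact (dirDeriv_congr (dirDeriv_comm (contDiffAt_cplx (hφ.of_le (by norm_num))) _ _)
    _).self_of_nhds

lemma dh_apply_eq_conj (hφ : ContDiffAt ℝ 3 φ z) (j k t : Fin n) :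
    dh φ k z t j = conj (wdb j (wd t (wdb k (cplx φ))) z) := by
  have hreal (x : Cn n) : conj (cplx φ x) = cplx φ x := conj_ofReal (φ x)
  have hconj : conj (wdb j (wd t (wdb k (cplx φ))) z) = wd j (wdb t (wd k (cplx φ))) z := by
    simp only [conj_wdb, conj_wd, hreal]
  rw [hconj]
  simp only [dh, hMat, of_apply, wd_eq_dirDeriv, wdb_eq_dirDeriv]
  exact (dirDeriv_reverse (contDiffAt_cplx hφ) _ _ _).self_of_nhds

lemma wdb_dh_apply_self (hφ : ContDiffAt ℝ 4 φ z) (j k : Fin n) :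
    wdb j (fun x => dh φ k x k j) z = wdb j (wd j (wdb k (wd k (cplx φ)))) z := by
  simp only [dh, hMat, of_apply, wd_eq_dirDeriv, wdb_eq_dirDeriv]
  exact (dirDeriv_congr (dirDeriv_reverse (contDiffAt_cplx (hφ.of_le (by norm_num))) _ _ _)
    _).self_of_nhds

end Potential

section Quadratic

variable {n : ℕ}

/-- The Hermitian form `(v, w) ↦ ∑ j, λ_j v_j w̄_j` as a real bilinear form; its values on the
diagonal are the quadratic part `∑ j, λ_j |z_j|²` of the potential. -/
def leviForm (lam : Fin n → ℝ) : Cn n →L[ℝ] Cn n →L[ℝ] ℂ :=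
  ∑ j, lam j • (ContinuousLinearMap.mul ℝ ℂ).bilinearComp (.proj j)
    (conjCLE.toContinuousLinearMap.comp (.proj j))

lemma leviForm_apply (lam : Fin n → ℝ) (v w : Cn n) :
    leviForm lam v w = ∑ j, lam j * (v j * conj (w j)) := by
  simp [leviForm, _root_.sum_apply]

lemma leviForm_single (lam : Fin n → ℝ) (j k : Fin n) (a b : ℂ) :
    leviForm lam (Pi.single j a) (Pi.single k b) =
      if j = k then lam j * (a * conj b) else 0 := by
  rw [leviForm_apply, Finset.sum_eq_single j]
  · rcases eq_or_ne j k with rfl | hjk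
    · simp
    · simp [hjk]
  · intro i _ hij
    simp [hij]
  · simp

lemma hMat_zero_eq_diagonal {lam : Fin n → ℝ} {φ : Cn n → ℝ} (hφ : ContDiffAt ℝ 2 φ 0)
    (hquad : (fun z => φ z - ∑ j, lam j * normSq (z j)) =o[𝓝 0] fun z => ‖z‖ ^ 2) :
    hMat φ 0 = diagonal fun j => (lam j : ℂ) := by
  have hlevi : (fun z => cplx φ z - leviForm lam z z) =o[𝓝 0] fun z => ‖z‖ ^ 2 :=
    (ofRealCLM.isBigO_comp _ _).trans_isLittleO hquad |>.congr_left fun z => by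
      simp [cplx, leviForm_apply, mul_conj]
  have hhess := fderiv_fderiv_zero_of_isLittleO (contDiffAt_cplx hφ) hlevi
  ext j k
  simp only [hMat, of_apply, wd_eq_dirDeriv, wdb_eq_dirDeriv,
    dirDeriv_dirDeriv_apply (contDiffAt_cplx hφ), hhess, dz, dzbar, map_neg, _root_.neg_apply,
    leviForm_single, smul_eq_mul]
  rcases eq_or_ne j k with rfl | hjk
  · simp only [if_true, map_div₀, map_one, map_ofNat, conj_I, diagonal_apply_eq]
    linear_combination (-(lam j : ℂ) / 2) * I_sq
  · simp [hjk, hjk.symm]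

end Quadratic

section Curvature

variable {n : ℕ} {lam : Fin n → ℝ} {φ : Cn n → ℝ}

lemma Gpair_eq_sub_sum (hlam : ∀ t, lam t ≠ 0) (hφ : ContDiffAt ℝ 4 φ 0)
    (hdiag : hMat φ 0 = diagonal fun t => (lam t : ℂ)) (j k : Fin n) :
    Gpair lam φ j k = 1 / (|lam j| * lam k) * (wdb j (wd j (wdb k (wd k (cplx φ)))) 0
      - ∑ t, (normSq (wdb j (wd t (wdb k (cplx φ))) 0) : ℂ) / lam t) := by
  have hφ3 : ContDiffAt ℝ 3 φ 0 := hφ.of_le (by norm_num)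
  have hinv : (hMat φ 0)⁻¹ = diagonal fun t => (lam t : ℂ)⁻¹ := by
    refine inv_eq_left_inv ?_
    simp [hdiag, diagonal_mul_diagonal, hlam]
  have hdet : (hMat φ 0).det ≠ 0 := by
    simp [hdiag, det_diagonal, Finset.prod_ne_zero_iff, hlam]
  have hM (a b : Fin n) : DifferentiableAt ℝ (fun x => hMat φ x a b) 0 :=
    (contDiffAt_hMat_apply (m := 1) (hφ.of_le (by norm_num)) a b).differentiableAt one_ne_zero
  have hN (a b : Fin n) : DifferentiableAt ℝ (fun x => dh φ k x a b) 0 :=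
    (contDiffAt_dh_apply (m := 1) (hφ.of_le (by norm_num)) k a b).differentiableAt one_ne_zero
  have hconn : wdb j (fun x => ((hMat φ x)⁻¹ * dh φ k x) k j) 0 =
      (lam k : ℂ)⁻¹ * wdb j (fun x => dh φ k x k j) 0
        - ∑ t, (lam k : ℂ)⁻¹ * wdb j (fun x => hMat φ x k t) 0 * (lam t : ℂ)⁻¹
            * dh φ k 0 t j := by
    have h := congrFun₂ (dirDeriv_matrix_inv_mul hM hN hdet (dzbar j)) k j
    rw [hinv, Matrix.sub_apply, diagonal_mul, mul_apply (M := _ * diagonal _)] at h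
    simpa only [wdb_eq_dirDeriv, mul_diagonal, diagonal_mul, of_apply] using h
  rw [Gpair, hconn, wdb_dh_apply_self hφ]
  simp only [wdb_hMat_apply hφ3, dh_apply_eq_conj hφ3, ← mul_conj, mul_sub, Finset.mul_sum]
  push_cast
  congr 1
  · ring
  · exact Finset.sum_congr rfl fun t _ => by ring

lemma one_div_mul_sum_div_eq_sub {ι : Type*} [Fintype ι] (μ : ι → ℝ) (a : ι → ℂ) (b c : ℝ) :
    ((1 / (b * c) : ℝ) : ℂ) * ∑ t, a t / μ t =
      (∑ t, if 0 < μ t then ((1 / (|μ t| * b * c) : ℝ) : ℂ) * a t else 0)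
        - ∑ t, if μ t < 0 then ((1 / (|μ t| * b * c) : ℝ) : ℂ) * a t else 0 := by
  rw [Finset.mul_sum, ← Finset.sum_sub_distrib]
  refine Finset.sum_congr rfl fun t _ => ?_
  rcases lt_trichotomy (μ t) 0 with ht | ht | ht
  · simp only [ht, ht.not_gt, abs_of_neg ht, if_true, if_false]
    push_cast
    ring
  · simp [ht]
  · simp only [ht, ht.not_gt, abs_of_pos ht, if_true, if_false]
    push_cast
    ring

theorem statement19_general (hlam : ∀ t, lam t ≠ 0) (hφ : ContDiffAt ℝ 4 φ 0)
    (hquad : (fun z => φ z - ∑ t, lam t * normSq (z t)) =o[𝓝 0] fun z => ‖z‖ ^ 2)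
    (j k : Fin n) :
    (0 < lam k → Gpair lam φ j k =
      ((1 / (|lam j| * |lam k|) : ℝ) : ℂ) * wdb j (wd j (wdb k (wd k (cplx φ)))) 0
        + (∑ t, if lam t < 0 then ((1 / (|lam t| * |lam j| * |lam k|) : ℝ) : ℂ) *
            (normSq (wdb j (wd t (wdb k (cplx φ))) 0) : ℂ) else 0)
        - ∑ t, if 0 < lam t then ((1 / (|lam t| * |lam j| * |lam k|) : ℝ) : ℂ) *
            (normSq (wdb j (wd t (wdb k (cplx φ))) 0) : ℂ) else 0) ∧
    (lam k < 0 → Gpair lam φ j k =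
      - ((1 / (|lam j| * |lam k|) : ℝ) : ℂ) * wdb j (wd j (wdb k (wd k (cplx φ)))) 0
        - (∑ t, if lam t < 0 then ((1 / (|lam t| * |lam j| * |lam k|) : ℝ) : ℂ) *
            (normSq (wdb j (wd t (wdb k (cplx φ))) 0) : ℂ) else 0)
        + ∑ t, if 0 < lam t then ((1 / (|lam t| * |lam j| * |lam k|) : ℝ) : ℂ) *
            (normSq (wdb j (wd t (wdb k (cplx φ))) 0) : ℂ) else 0) := by
  have hG := Gpair_eq_sub_sum hlam hφ (hMat_zero_eq_diagonal (hφ.of_le (by norm_num)) hquad) j k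
  have hsplit := one_div_mul_sum_div_eq_sub lam
    (fun t => (normSq (wdb j (wd t (wdb k (cplx φ))) 0) : ℂ)) |lam j| |lam k|
  rw [hG]
  refine ⟨fun hk => ?_, fun hk => ?_⟩
  · have hcoeff : (1 / (|lam j| * lam k) : ℂ) = ((1 / (|lam j| * |lam k|) : ℝ) : ℂ) := by
      rw [abs_of_pos hk]
      push_cast
      rfl
    rw [hcoeff]
    linear_combination -hsplit
  · have hcoeff : (1 / (|lam j| * lam k) : ℂ) = -((1 / (|lam j| * |lam k|) : ℝ) : ℂ) := by
      rw [abs_of_neg hk]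
      push_cast
      ring
    rw [hcoeff]
    linear_combination hsplit

end Curvature

section Signature

variable {n q : ℕ} {lam : Fin n → ℝ}

lemma PhiOK.contDiffAt {φ : Cn n → ℝ} (hφ : PhiOK lam φ) (m : ℕ) (z : Cn n) :
    ContDiffAt ℝ m φ z :=
  (contDiff_infty.1 hφ.1 m).contDiffAt

lemma PhiOK.isLittleO {φ : Cn n → ℝ} (hφ : PhiOK lam φ) :
    (fun z => φ z - ∑ t, lam t * normSq (z t)) =o[𝓝 0] fun z => ‖z‖ ^ 2 :=
  hφ.2.trans_isLittleO (isLittleO_norm_pow_norm_pow (by norm_num))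

lemma val_lt_iff_neg (hneg : ∀ j : Fin n, (j : ℕ) < q → lam j < 0)
    (hpos : ∀ j : Fin n, q ≤ (j : ℕ) → 0 < lam j) (t : Fin n) : (t : ℕ) < q ↔ lam t < 0 :=
  ⟨hneg t, fun ht => not_le.1 fun hqt => ht.not_gt (hpos t hqt)⟩

lemma le_val_iff_pos (hneg : ∀ j : Fin n, (j : ℕ) < q → lam j < 0)
    (hpos : ∀ j : Fin n, q ≤ (j : ℕ) → 0 < lam j) (t : Fin n) : q ≤ (t : ℕ) ↔ 0 < lam t :=
  ⟨hpos t, fun ht => not_lt.1 fun htq => ht.not_gt (hneg t htq)⟩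

lemma ne_zero_of_neg_of_pos (hneg : ∀ j : Fin n, (j : ℕ) < q → lam j < 0)
    (hpos : ∀ j : Fin n, q ≤ (j : ℕ) → 0 < lam j) (t : Fin n) : lam t ≠ 0 :=
  (lt_or_ge (t : ℕ) q).elim (fun h => (hneg t h).ne) fun h => (hpos t h).ne'

end Signature

theorem statement19 (n q : ℕ) (hn : 1 ≤ n) (hq : q ≤ n) (lam : Fin n → ℝ)
    (hneg : ∀ j : Fin n, (j : ℕ) < q → lam j < 0)
    (hpos : ∀ j : Fin n, q ≤ (j : ℕ) → 0 < lam j)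
    (φ : Cn n → ℝ) (hφ : PhiOK lam φ) :
    -- (1) q+1 ≤ j,k ≤ n
    (∀ j k : Fin n, q ≤ (j : ℕ) → q ≤ (k : ℕ) →
      Gpair lam φ j k =
        ((1 / (|lam j| * |lam k|) : ℝ) : ℂ) * wdb j (wd j (wdb k (wd k (cplx φ)))) 0
        + (∑ t : Fin n, if (t : ℕ) < q then
            ((1 / (|lam t| * |lam j| * |lam k|) : ℝ) : ℂ) *
              (Complex.normSq (wdb j (wd t (wdb k (cplx φ))) 0) : ℂ)
          else 0)
        - ∑ t : Fin n, if q ≤ (t : ℕ) then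
            ((1 / (|lam t| * |lam j| * |lam k|) : ℝ) : ℂ) *
              (Complex.normSq (wdb j (wd t (wdb k (cplx φ))) 0) : ℂ)
          else 0) ∧
    -- (2) 1 ≤ j,k ≤ q
    (∀ j k : Fin n, (j : ℕ) < q → (k : ℕ) < q →
      Gpair lam φ j k =
        - ((1 / (|lam j| * |lam k|) : ℝ) : ℂ) * wdb j (wd j (wdb k (wd k (cplx φ)))) 0
        - (∑ t : Fin n, if (t : ℕ) < q then
            ((1 / (|lam t| * |lam j| * |lam k|) : ℝ) : ℂ) *
              (Complex.normSq (wdb j (wd t (wdb k (cplx φ))) 0) : ℂ)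
          else 0)
        + ∑ t : Fin n, if q ≤ (t : ℕ) then
            ((1 / (|lam t| * |lam j| * |lam k|) : ℝ) : ℂ) *
              (Complex.normSq (wdb j (wd t (wdb k (cplx φ))) 0) : ℂ)
          else 0) ∧
    -- (3) q+1 ≤ j ≤ n, 1 ≤ k ≤ q
    (∀ j k : Fin n, q ≤ (j : ℕ) → (k : ℕ) < q →
      Gpair lam φ j k =
        - ((1 / (|lam j| * |lam k|) : ℝ) : ℂ) * wdb j (wd j (wdb k (wd k (cplx φ)))) 0
        - (∑ t : Fin n, if (t : ℕ) < q then
            ((1 / (|lam t| * |lam j| * |lam k|) : ℝ) : ℂ) *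
              (Complex.normSq (wdb j (wd t (wdb k (cplx φ))) 0) : ℂ)
          else 0)
        + ∑ t : Fin n, if q ≤ (t : ℕ) then
            ((1 / (|lam t| * |lam j| * |lam k|) : ℝ) : ℂ) *
              (Complex.normSq (wdb j (wd t (wdb k (cplx φ))) 0) : ℂ)
          else 0) ∧
    -- (4) 1 ≤ j ≤ q, q+1 ≤ k ≤ n
    (∀ j k : Fin n, (j : ℕ) < q → q ≤ (k : ℕ) →
      Gpair lam φ j k =
        ((1 / (|lam j| * |lam k|) : ℝ) : ℂ) * wdb j (wd j (wdb k (wd k (cplx φ)))) 0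
        + (∑ t : Fin n, if (t : ℕ) < q then
            ((1 / (|lam t| * |lam j| * |lam k|) : ℝ) : ℂ) *
              (Complex.normSq (wdb j (wd t (wdb k (cplx φ))) 0) : ℂ)
          else 0)
        - ∑ t : Fin n, if q ≤ (t : ℕ) then
            ((1 / (|lam t| * |lam j| * |lam k|) : ℝ) : ℂ) *
              (Complex.normSq (wdb j (wd t (wdb k (cplx φ))) 0) : ℂ)
          else 0) := by
  have hG := statement19_general (ne_zero_of_neg_of_pos hneg hpos) (hφ.contDiffAt 4 0) hφ.isLittleO
  simp only [val_lt_iff_neg hneg hpos, le_val_iff_pos hneg hpos]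
  exact ⟨fun j k _ => (hG j k).1, fun j k _ => (hG j k).2, fun j k _ => (hG j k).2,
    fun j k _ => (hG j k).1⟩
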